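/- Let n ≥ 4, let G = (Z/nZ) × (Z/nZ), let k ∈ [2, n-2], and let S be a sequence over G with |S| = 2n-2+k and no nonempty zero-sum subsequence of length at most 2n-1-k. Suppose there are e1, e2 ∈ G with supp(S) ⊆ {e1} ∪ (⟨e1⟩ + e2). Then there exists f2 ∈ ⟨e1⟩ + e2 such that (e1, f2) is a basis for G and S = e1^{[n-1]} · f2^{[n-1]} · (e1+f2)^{[k]}. -/

import Mathlib

/-- `(e1, e2)` is a basis for `(ZMod n)²`: the map `(a,b) ↦ a•e1 + b•e2` is bijective. -/
def IsBasis {N : ℕ} (e1 e2 : ZMod N × ZMod N) : Prop :=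
  Function.Bijective (fun p : ZMod N × ZMod N => p.1 • e1 + p.2 • e2)

/-!
Write `S` as `m` copies of `e1` and the elements `a • e1 + e2` for `a` in a multiset `A` over
`ZMod n`. The sum of `n` terms of the second kind is `s • e1`, where `s` is the sum of `n` terms of
`A`, and copies of `e1` can be added to it, so `s` avoids `0, -1, …, -min m (n - 1 - k)`. Conversely
`A` has more than `r` sums of `n` terms whenever it has at least `n + r` terms, `r ≤ n`, and `0` is
not among these sums: translate the most frequent term to `0`, pass to the complementary sums of `r`
terms, and add up sets of distinct nonzero terms with Scherk's theorem. Comparing the two bounds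
gives `m = n - 1` and `n + k - 1` terms in `A`, and the sums of `n` terms are exactly `1, …, k`. In
this equality case they also form an arithmetic progression, and unless `k` times its difference is
`0`, the only values of `A` are some `b` and `b` plus the difference. The difference of an interval
of length `2 ≤ k ≤ n - 2` being `1` or `-1`, it remains to count the occurrences of `b` and `b + 1`.
-/

section Scherk

open scoped Pointwise

variable {G : Type*} [AddCommGroup G]

theorem eq_zero_of_forall_add_mem {A : Finset G} {b : G} (h0 : 0 ∈ A)
    (hadd : ∀ a ∈ A, a + b ∈ A) (hb : ∀ a ∈ A, a + b = 0 → b = 0) : b = 0 := by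
  have hmul : ∀ i : ℕ, i • b ∈ A := fun i ↦ by
    induction i with
    | zero => simpa using h0
    | succ i ih => simpa [succ_nsmul] using hadd _ ih
  have hfin : IsOfFinAddOrder b := by
    by_contra hinf
    exact Set.infinite_of_injective_forall_mem (injective_nsmul_iff_not_isOfFinAddOrder.2 hinf)
      hmul A.finite_toSet
  refine hb _ (hmul (addOrderOf b - 1)) ?_
  rw [← succ_nsmul, Nat.sub_add_cancel hfin.addOrderOf_pos, addOrderOf_nsmul_eq_zero]

variable [DecidableEq G]

-- Scherk's theorem, by induction on `B` along Dyson's `e`-transform.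
theorem card_add_card_le_card_add_add_one {A B : Finset G} (hA : 0 ∈ A) (hB : 0 ∈ B)
    (h : ∀ a ∈ A, ∀ b ∈ B, a + b = 0 → b = 0) : A.card + B.card ≤ (A + B).card + 1 := by
  induction hm : B.card using Nat.strong_induction_on generalizing A B with
  | _ m ih =>
  subst hm
  by_cases H : ∃ a ∈ A, ∃ b ∈ B, a + b ∉ A
  · obtain ⟨a, ha, b, hb, hab⟩ := H
    set A' := (Finset.addDysonETransform a (A, B)).1 with hA'
    set B' := (Finset.addDysonETransform a (A, B)).2 with hB'
    have mem_A' {x : G} : x ∈ A' ↔ x ∈ A ∨ ∃ c ∈ B, a + c = x := by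
      simp [hA', Finset.mem_vadd_finset]
    have mem_B' {x : G} : x ∈ B' ↔ x ∈ B ∧ a + x ∈ A := by
      simp [hB', Finset.mem_vadd_finset, neg_add_eq_iff_eq_add]
    have hcard : A'.card + B'.card = A.card + B.card := Finset.addDysonETransform.card a (A, B)
    have hlt : B'.card < B.card := Finset.card_lt_card
      ⟨fun x hx ↦ (mem_B'.1 hx).1, fun hsub ↦ hab (mem_B'.1 (hsub hb)).2⟩
    have hA'B' : ∀ x ∈ A', ∀ y ∈ B', x + y = 0 → y = 0 := by
      intro x hx y hy hxy
      obtain ⟨hyB, hyA⟩ := mem_B'.1 hy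
      rcases mem_A'.1 hx with hx | ⟨c, hc, rfl⟩
      · exact h x hx y hyB hxy
      · obtain rfl : c = 0 := h _ hyA c hc (by rw [← hxy, add_right_comm])
        exact h a ha y hyB (by simpa using hxy)
    have hind : A'.card + B'.card ≤ (A' + B').card + 1 :=
      ih _ hlt (mem_A'.2 (.inl hA)) (mem_B'.2 ⟨hB, by simpa using ha⟩) hA'B' rfl
    have hle : (A' + B').card ≤ (A + B).card :=
      Finset.card_le_card (Finset.addDysonETransform.subset a (A, B))
    omega
  · push Not at H
    have hB0 : B ⊆ {0} := fun b hb ↦ Finset.mem_singleton.2 <|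
      eq_zero_of_forall_add_mem hA (fun a ha ↦ H a ha b hb) (fun a ha ↦ h a ha b hb)
    have hBcard : B.card ≤ 1 := by simpa using Finset.card_le_card hB0
    have hle : A.card ≤ (A + B).card := Finset.card_le_card (Finset.subset_add_left A hB)
    omega

end Scherk

section Multisets

variable {α : Type*} {s : Multiset α}

theorem exists_le_card_eq {k : ℕ} (hk : k ≤ s.card) : ∃ t ≤ s, t.card = k := by
  obtain ⟨t, ht⟩ : ∃ t, t ∈ s.powersetCard k := Multiset.card_pos_iff_exists_mem.1 <| by
    simpa using Nat.choose_pos hk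
  exact ⟨t, Multiset.mem_powersetCard.1 ht⟩

theorem exists_eq_map {β : Type*} {f : β → α} (h : ∀ a ∈ s, ∃ b, f b = a) :
    ∃ t : Multiset β, s = t.map f := by
  have : CanLift α β f (fun a ↦ ∃ b, f b = a) := ⟨fun _ ↦ id⟩
  lift s to Multiset β using h
  exact ⟨s, rfl⟩

variable [DecidableEq α]

theorem exists_forall_count_le [Nonempty α] (s : Multiset α) : ∃ c, ∀ x, s.count x ≤ s.count c := by
  have hbdd : BddAbove (Set.range s.count) :=
    ⟨s.card, Set.forall_mem_range.2 fun x ↦ s.count_le_card x⟩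
  obtain ⟨c, hc⟩ := Nat.sSup_mem (Set.range_nonempty s.count) hbdd
  exact ⟨c, fun x ↦ (le_csSup hbdd ⟨x, rfl⟩).trans_eq hc.symm⟩

theorem replicate_count_add_filter_ne (s : Multiset α) (a : α) :
    .replicate (s.count a) a + s.filter (· ≠ a) = s := by
  rw [← Multiset.filter_eq', Multiset.filter_add_not]

theorem exists_eq_replicate_add_replicate {a b : α} (h : ∀ x ∈ s, x = a ∨ x = b) :
    ∃ m, s = .replicate (s.count a) a + .replicate m b := by
  refine ⟨(s.filter (· ≠ a)).card, ?_⟩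
  conv_lhs => rw [← replicate_count_add_filter_ne s a]
  rw [add_right_inj, Multiset.eq_replicate_card]
  exact fun x hx ↦ (h x (Multiset.mem_of_mem_filter hx)).resolve_left (Multiset.mem_filter.1 hx).2

end Multisets

section Sums

variable {G : Type*} [AddCommGroup G]

/-- The paper's hypothesis `0 ∉ Σ_{≤ ℓ}(S)`: the sequence `S`, encoded as a multiset, has no
nonempty zero-sum subsequence of length at most `ℓ`. -/
def IsShortZeroSumFree (ℓ : ℕ) (S : Multiset G) : Prop :=
  ∀ T ≤ S, T ≠ 0 → T.card ≤ ℓ → T.sum ≠ 0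

variable {ℓ m n r : ℕ} {S T W : Multiset G} {g : G}

theorem IsShortZeroSumFree.mono (h : IsShortZeroSumFree ℓ S) (hT : T ≤ S) (hm : m ≤ ℓ) :
    IsShortZeroSumFree m T :=
  fun V hV hV0 hcard ↦ h V (hV.trans hT) hV0 (hcard.trans hm)

theorem IsShortZeroSumFree.zero_notMem (h : IsShortZeroSumFree ℓ S) (hℓ : ℓ ≠ 0) : 0 ∉ S := fun h0 ↦
  h {0} (Multiset.singleton_le.2 h0) (by simp) (by simpa [Nat.one_le_iff_ne_zero]) (by simp)

variable [DecidableEq G]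

/-- The set `Σ_ℓ(S)` of the sums of the subsequences of `S` of length exactly `ℓ`. -/
def sumsOfLength (ℓ : ℕ) (S : Multiset G) : Finset G :=
  ((S.powersetCard ℓ).map Multiset.sum).toFinset

/-- The set `{0} ∪ Σ_{≤ ℓ}(S)` of the sums of the subsequences of `S` of length at most `ℓ`. The
empty subsequence is admitted so that these sets behave well under sumsets. -/
def sumsUpToLength (ℓ : ℕ) (S : Multiset G) : Finset G :=
  ((S.powerset.filter fun T ↦ T.card ≤ ℓ).map Multiset.sum).toFinset

theorem mem_sumsOfLength : g ∈ sumsOfLength ℓ S ↔ ∃ T ≤ S, T.card = ℓ ∧ T.sum = g := by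
  simp [sumsOfLength, Multiset.mem_powersetCard, and_assoc]

theorem mem_sumsUpToLength : g ∈ sumsUpToLength ℓ S ↔ ∃ T ≤ S, T.card ≤ ℓ ∧ T.sum = g := by
  simp [sumsUpToLength, and_assoc]

theorem sumsOfLength_mono (h : S ≤ T) : sumsOfLength ℓ S ⊆ sumsOfLength ℓ T :=
  Multiset.toFinset_subset.2 <|
    Multiset.map_subset_map <| Multiset.subset_of_le <| Multiset.powersetCard_mono ℓ h

theorem sumsUpToLength_mono (h : S ≤ T) : sumsUpToLength ℓ S ⊆ sumsUpToLength ℓ T := by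
  intro g hg
  obtain ⟨U, hU, hcard, hsum⟩ := mem_sumsUpToLength.1 hg
  exact mem_sumsUpToLength.2 ⟨U, hU.trans h, hcard, hsum⟩

theorem zero_mem_sumsUpToLength : 0 ∈ sumsUpToLength ℓ S :=
  mem_sumsUpToLength.2 ⟨0, S.zero_le, by simp, by simp⟩

theorem sumsOfLength_eq_image_sum_sub (h : ℓ + m = S.card) :
    sumsOfLength ℓ S = (sumsOfLength m S).image (S.sum - ·) := by
  have compl {ℓ m : ℕ} (h : ℓ + m = S.card) {g : G} (hg : g ∈ sumsOfLength m S) :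
      S.sum - g ∈ sumsOfLength ℓ S := by
    obtain ⟨T, hT, hcard, rfl⟩ := mem_sumsOfLength.1 hg
    have hsplit : S - T + T = S := Multiset.sub_add_cancel hT
    refine mem_sumsOfLength.2 ⟨S - T, tsub_le_self, ?_, ?_⟩
    · rw [Multiset.card_sub hT]; omega
    · rw [eq_sub_iff_add_eq, ← Multiset.sum_add, hsplit]
  ext g
  refine ⟨fun hg ↦ Finset.mem_image.2 ⟨_, compl (by omega) hg, sub_sub_cancel _ _⟩, fun hg ↦ ?_⟩
  obtain ⟨x, hx, rfl⟩ := Finset.mem_image.1 hg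
  exact compl h hx

theorem sumsOfLength_map_sub {c : G} (hc : n • c = 0) :
    sumsOfLength n (S.map (· - c)) = sumsOfLength n S := by
  rw [sumsOfLength, sumsOfLength, Multiset.powersetCard_map, Multiset.map_map]
  congr 1
  refine Multiset.map_congr rfl fun T hT ↦ ?_
  simp [Multiset.sum_map_sub, (Multiset.mem_powersetCard.1 hT).2, hc]

theorem count_lt_of_zero_notMem_sumsOfLength (hg : n • g = 0) (h : 0 ∉ sumsOfLength n S) :
    S.count g < n := by
  by_contra! hge
  exact h <| mem_sumsOfLength.2
    ⟨.replicate n g, Multiset.le_count_iff_replicate_le.1 hge, by simp, by simpa using hg⟩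

theorem sumsUpToLength_replicate_subset (ℓ m : ℕ) (g : G) :
    sumsUpToLength ℓ (.replicate m g) ⊆ (Finset.range (ℓ + 1)).image (· • g) := by
  intro x hx
  obtain ⟨T, hT, hcard, rfl⟩ := mem_sumsUpToLength.1 hx
  obtain ⟨i, -, rfl⟩ := Multiset.le_replicate_iff.1 hT
  rw [Multiset.card_replicate] at hcard
  exact Finset.mem_image.2 ⟨i, by simpa [Nat.lt_succ_iff] using hcard, by simp⟩

theorem card_sumsUpToLength_le_card_sumsOfLength {F R : Multiset G}
    (hW : .replicate m 0 + F + R ≤ W) :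
    (sumsUpToLength m R).card ≤ (sumsOfLength (F.card + m) W).card := by
  refine Finset.card_le_card_of_injOn (F.sum + ·) (fun g hg ↦ ?_) (add_right_injective _).injOn
  obtain ⟨V, hV, hcard, rfl⟩ := mem_sumsUpToLength.1 hg
  refine mem_sumsOfLength.2 ⟨.replicate (m - V.card) 0 + F + V, le_trans ?_ hW, ?_, by simp⟩
  · gcongr
    exact Nat.sub_le _ _
  · simp only [Multiset.card_add, Multiset.card_replicate]; omega

open scoped Pointwise in
theorem sumsUpToLength_add_subset :
    sumsUpToLength ℓ S + sumsUpToLength m T ⊆ sumsUpToLength (ℓ + m) (S + T) := by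
  intro g hg
  obtain ⟨x, hx, y, hy, rfl⟩ := Finset.mem_add.1 hg
  obtain ⟨U, hU, hUcard, rfl⟩ := mem_sumsUpToLength.1 hx
  obtain ⟨V, hV, hVcard, rfl⟩ := mem_sumsUpToLength.1 hy
  exact mem_sumsUpToLength.2
    ⟨U + V, add_le_add hU hV, by simpa using add_le_add hUcard hVcard, Multiset.sum_add U V⟩

theorem insert_zero_toFinset_subset_sumsUpToLength :
    insert 0 S.toFinset ⊆ sumsUpToLength 1 S := by
  refine Finset.insert_subset zero_mem_sumsUpToLength fun x hx ↦ mem_sumsUpToLength.2 ?_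
  exact ⟨{x}, Multiset.singleton_le.2 (Multiset.mem_toFinset.1 hx), by simp, by simp⟩

namespace IsShortZeroSumFree

theorem card_sumsUpToLength_add_le (h : IsShortZeroSumFree (ℓ + m) (S + T)) :
    (sumsUpToLength ℓ S).card + (sumsUpToLength m T).card ≤
      (sumsUpToLength (ℓ + m) (S + T)).card + 1 := by
  refine (card_add_card_le_card_add_add_one zero_mem_sumsUpToLength zero_mem_sumsUpToLength
    fun x hx y hy hxy ↦ ?_).trans (by gcongr; exact sumsUpToLength_add_subset)
  obtain ⟨U, hU, hUcard, rfl⟩ := mem_sumsUpToLength.1 hx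
  obtain ⟨V, hV, hVcard, rfl⟩ := mem_sumsUpToLength.1 hy
  have hUV : U + V = 0 := by
    by_contra hne
    exact h _ (add_le_add hU hV) hne (by simpa using add_le_add hUcard hVcard) (by simpa using hxy)
  simp [(add_eq_zero.1 hUV).2]

theorem card_lt_card_sumsUpToLength (h : IsShortZeroSumFree ℓ S) (hcount : ∀ x, S.count x ≤ ℓ) :
    S.card < (sumsUpToLength ℓ S).card := by
  induction ℓ generalizing S with
  | zero =>
    obtain rfl : S = 0 := Multiset.eq_zero_of_forall_notMem fun x ↦
      Multiset.count_eq_zero.1 (Nat.le_zero.1 (hcount x))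
    exact Finset.card_pos.2 ⟨0, zero_mem_sumsUpToLength⟩
  | succ ℓ ih =>
    have hsplit : S - S.dedup + S.dedup = S := Multiset.sub_add_cancel S.dedup_le
    have hrest : (S - S.dedup).card < (sumsUpToLength ℓ (S - S.dedup)).card := by
      refine ih (h.mono tsub_le_self ℓ.le_succ) fun x ↦ ?_
      have := hcount x
      rw [Multiset.count_sub, Multiset.count_dedup]
      split_ifs with hx
      · omega
      · simp [Multiset.count_eq_zero_of_notMem hx]
    have hdedup : S.dedup.card < (sumsUpToLength 1 S.dedup).card := by
      have h0 : 0 ∉ S.dedup.toFinset := by simpa using h.zero_notMem ℓ.succ_ne_zero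
      have := Finset.card_le_card (insert_zero_toFinset_subset_sumsUpToLength (S := S.dedup))
      rwa [Finset.card_insert_of_notMem h0, Multiset.toFinset_card_of_nodup S.nodup_dedup] at this
    have hscherk := card_sumsUpToLength_add_le (S := S - S.dedup) (T := S.dedup)
      (h.mono hsplit.le le_rfl)
    have hcard := congrArg Multiset.card hsplit
    rw [Multiset.card_add] at hcard
    rw [hsplit] at hscherk
    omega

end IsShortZeroSumFree

-- Removing from the nonzero terms a zero-sum subsequence of maximal length among those of length
-- less than `n - count 0 W` leaves no short zero-sum subsequence, since a zero-sum subsequence of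
-- length between `n - count 0 W` and `n` could be padded with zeros to length `n`.
theorem exists_isShortZeroSumFree_le_filter_ne (h : 0 ∉ sumsOfLength n W) :
    ∃ T ≤ W.filter (· ≠ 0), IsShortZeroSumFree (W.count 0) T ∧ W.card < n + T.card := by
  set h0 := W.count 0
  set N := W.filter (· ≠ 0)
  have hsplit : .replicate h0 0 + N = W := replicate_count_add_filter_ne W 0
  have hh0 : h0 < n := count_lt_of_zero_notMem_sumsOfLength (smul_zero n) h
  have hfin : {U | U ≤ N ∧ U.sum = 0 ∧ U.card + h0 < n}.Finite :=
    (Set.finite_Iic N).subset fun U hU ↦ hU.1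
  obtain ⟨U, ⟨hUN, hUsum, hUcard⟩, hmax⟩ := hfin.exists_maximal ⟨0, N.zero_le, by simp, by simpa⟩
  refine ⟨N - U, tsub_le_self, fun V hV hV0 hVcard hVsum ↦ ?_, ?_⟩
  · have hUV : U + V ≤ N := add_le_of_le_tsub_left_of_le hUN hV
    have hpos : 0 < V.card := Multiset.card_pos.2 hV0
    by_cases hlong : n ≤ (U + V).card + h0
    · rw [Multiset.card_add] at hlong
      refine h (mem_sumsOfLength.2
        ⟨.replicate (n - (U + V).card) 0 + (U + V), ?_, ?_, by simp [hUsum, hVsum]⟩)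
      · rw [← hsplit]
        gcongr
        simp only [Multiset.card_add]; omega
      · simp only [Multiset.card_add, Multiset.card_replicate]; omega
    · have := Multiset.card_le_card (hmax ⟨hUV, by simp [hUsum, hVsum], by omega⟩ le_self_add)
      rw [Multiset.card_add] at this
      omega
  · have := congrArg Multiset.card hsplit
    rw [Multiset.card_add, Multiset.card_replicate] at this
    rw [Multiset.card_sub hUN]
    omega

theorem card_lt_card_sumsOfLength_of_le_filter_ne {R : Multiset G} (hRW : R ≤ W.filter (· ≠ 0))
    (hR : IsShortZeroSumFree (W.count 0) R) (hcount : ∀ x, R.count x ≤ min (W.count 0) r)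
    (hcard : R.card + r ≤ W.card) : R.card < (sumsOfLength r W).card := by
  have hsplit := replicate_count_add_filter_ne W 0
  have hWcard := congrArg Multiset.card hsplit
  rw [Multiset.card_add, Multiset.card_replicate] at hWcard
  obtain ⟨F, hF, hFcard⟩ : ∃ F ≤ W.filter (· ≠ 0) - R, F.card = r - min (W.count 0) r :=
    exists_le_card_eq (by rw [Multiset.card_sub hRW]; omega)
  have hle : .replicate (min (W.count 0) r) 0 + F + R ≤ W := by
    rw [add_assoc]
    refine (add_le_add ?_ (add_le_of_le_tsub_right_of_le hRW hF)).trans_eq hsplit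
    exact (Multiset.replicate_le_replicate 0).2 (min_le_left _ _)
  have hsums := card_sumsUpToLength_le_card_sumsOfLength hle
  rw [hFcard, Nat.sub_add_cancel (min_le_right _ _)] at hsums
  exact ((hR.mono le_rfl (min_le_left _ _)).card_lt_card_sumsUpToLength hcount).trans_le hsums

theorem lt_card_sumsOfLength_of_forall_count_le_count_zero (hmax : ∀ x, W.count x ≤ W.count 0)
    (h : 0 ∉ sumsOfLength n W) (hcard : n + r ≤ W.card) (hr : r ≤ n) :
    r < (sumsOfLength r W).card := by
  obtain ⟨T, hTW, hT, hTcard⟩ := exists_isShortZeroSumFree_le_filter_ne h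
  obtain ⟨R, hRT, rfl⟩ : ∃ R ≤ T, R.card = r := exists_le_card_eq (by omega)
  have hRW := hRT.trans hTW
  exact card_lt_card_sumsOfLength_of_le_filter_ne hRW (hT.mono hRT le_rfl)
    (fun x ↦ le_min ((Multiset.count_le_of_le x (hRW.trans (W.filter_le _))).trans (hmax x))
      (R.count_le_card x)) (by omega)

theorem exists_replicate_le_filter_ne (hmax : ∀ x, W.count x ≤ W.count 0)
    (h : 0 ∉ sumsOfLength n W) (hcard : n + r ≤ W.card) (hr : r < n)
    (hsums : (sumsOfLength r W).card ≤ r + 1) :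
    ∃ d, .replicate (r + 1) d ≤ W.filter (· ≠ 0) ∧
      IsShortZeroSumFree r (.replicate (r + 1) d) ∧ r < W.count 0 := by
  obtain ⟨T, hTW, hT, hTcard⟩ := exists_isShortZeroSumFree_le_filter_ne h
  obtain ⟨R, hRT, hRcard⟩ : ∃ R ≤ T, R.card = r + 1 := exists_le_card_eq (by omega)
  have hRW := hRT.trans hTW
  have hRfree := hT.mono hRT le_rfl
  obtain ⟨d, hd⟩ : ∃ d, min (W.count 0) r < R.count d := by
    by_contra! hcount
    have := card_lt_card_sumsOfLength_of_le_filter_ne hRW hRfree hcount (by omega)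
    omega
  have hdW : R.count d ≤ W.count 0 :=
    (Multiset.count_le_of_le d (hRW.trans (W.filter_le _))).trans (hmax d)
  have hdR := R.count_le_card d
  obtain rfl : R = .replicate (r + 1) d := Multiset.eq_replicate.2
    ⟨hRcard, fun x hx ↦ (Multiset.count_eq_card.1 (by omega : R.count d = R.card) x hx).symm⟩
  exact ⟨d, hRW, hRfree.mono le_rfl (by omega), by omega⟩

theorem sumsUpToLength_filter_ne_subset (hr : r ≤ W.count 0) :
    sumsUpToLength r (W.filter (· ≠ 0)) ⊆ sumsOfLength r W := by
  intro g hg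
  obtain ⟨V, hV, hVcard, rfl⟩ := mem_sumsUpToLength.1 hg
  refine mem_sumsOfLength.2 ⟨.replicate (r - V.card) 0 + V, ?_, by simp [hVcard], by simp⟩
  refine (add_le_add ?_ hV).trans_eq (replicate_count_add_filter_ne W 0)
  exact (Multiset.replicate_le_replicate 0).2 (by omega)

theorem eq_of_mem_of_sumsUpToLength_subset {d x : G} (hr : 1 ≤ r) (hd : .replicate r d ≤ T)
    (hfree : IsShortZeroSumFree r (.replicate (r + 1) d)) (hrd : (r + 1) • d ≠ 0)
    (hsub : sumsUpToLength r T ⊆ (Finset.range (r + 1)).image (· • d)) (hx : x ∈ T) (hx0 : x ≠ 0) :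
    x = d := by
  by_contra hxd
  have hmem (i : ℕ) (hi : i < r) : ∃ j ≤ r, j • d = x + i • d := by
    have hle : x ::ₘ .replicate i d ≤ T :=
      (Multiset.cons_le_of_notMem fun hxi ↦ hxd (Multiset.eq_of_mem_replicate hxi)).2
        ⟨hx, ((Multiset.replicate_le_replicate d).2 hi.le).trans hd⟩
    have := hsub (mem_sumsUpToLength.2 ⟨_, hle, by simpa, rfl⟩)
    simpa [Nat.lt_succ_iff] using this
  obtain ⟨j, hj, hjx⟩ := hmem 0 hr
  simp only [zero_smul, add_zero] at hjx
  have hj2 : 2 ≤ j := by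
    by_contra! hj2
    interval_cases j
    · exact hx0 (by simpa using hjx.symm)
    · exact hxd (by simpa using hjx.symm)
  obtain ⟨i, hi, hix⟩ := hmem (r + 1 - j) (by omega)
  rw [← hjx, ← add_nsmul, Nat.add_sub_cancel' (by omega)] at hix
  have hi0 : i ≠ 0 := by rintro rfl; exact hrd (by simpa using hix.symm)
  refine hfree (.replicate (r + 1 - i) d) ((Multiset.replicate_le_replicate d).2 (by omega))
    (by rw [← Multiset.card_pos, Multiset.card_replicate]; omega) (by simp; omega) ?_
  rw [Multiset.sum_replicate, sub_nsmul _ (by omega), hix, add_neg_cancel]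

theorem sumsOfLength_eq_image_nsmul (hmax : ∀ x, W.count x ≤ W.count 0)
    (h : 0 ∉ sumsOfLength n W) (hcard : n + r ≤ W.card) (hr1 : 1 ≤ r) (hr : r < n)
    (hsums : (sumsOfLength r W).card ≤ r + 1) :
    ∃ d, sumsOfLength r W = (Finset.range (r + 1)).image (· • d) ∧
      ((r + 1) • d = 0 ∨ ∀ x ∈ W, x = 0 ∨ x = d) := by
  obtain ⟨d, hdW, hfree, hr0⟩ := exists_replicate_le_filter_ne hmax h hcard hr hsums
  have hdr : .replicate r d ≤ Multiset.replicate (r + 1) d :=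
    (Multiset.replicate_le_replicate d).2 r.le_succ
  have hsub : sumsUpToLength r (.replicate r d) ⊆ sumsOfLength r W :=
    (sumsUpToLength_mono (hdr.trans hdW)).trans (sumsUpToLength_filter_ne_subset hr0.le)
  have hlarge : r + 1 ≤ (sumsUpToLength r (.replicate r d)).card := by
    simpa using (hfree.mono hdr le_rfl).card_lt_card_sumsUpToLength fun x ↦
      (Multiset.count_le_card x _).trans_eq (Multiset.card_replicate r d)
  have heq : sumsOfLength r W = (Finset.range (r + 1)).image (· • d) := by
    rw [← Finset.eq_of_subset_of_card_le hsub (hsums.trans hlarge)]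
    refine Finset.eq_of_subset_of_card_le (sumsUpToLength_replicate_subset r r d) ?_
    exact (Finset.card_image_le.trans_eq (Finset.card_range _)).trans hlarge
  refine ⟨d, heq, or_iff_not_imp_left.2 fun hrd x hx ↦ or_iff_not_imp_left.2 fun hx0 ↦ ?_⟩
  exact eq_of_mem_of_sumsUpToLength_subset hr1 (hdr.trans hdW) hfree hrd
    (heq ▸ sumsUpToLength_filter_ne_subset hr0.le) (Multiset.mem_filter.2 ⟨hx, hx0⟩) hx0

theorem exists_forall_count_map_sub_le_count_zero (W : Multiset G) :
    ∃ c, ∀ x, (W.map (· - c)).count x ≤ (W.map (· - c)).count 0 := by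
  obtain ⟨c, hc⟩ := exists_forall_count_le W
  have hcount (x : G) : (W.map (· - c)).count x = W.count (x + c) := by
    simpa using Multiset.count_map_eq_count' (· - c) W sub_left_injective (x + c)
  exact ⟨c, fun x ↦ by simpa only [hcount, zero_add] using hc (x + c)⟩

section ZModModule

variable [Module (ZMod n) G]

theorem lt_card_sumsOfLength (h : 0 ∉ sumsOfLength n W) (hcard : n + r ≤ W.card) (hr : r ≤ n) :
    r < (sumsOfLength n W).card := by
  obtain ⟨W', hW', hcard'⟩ := exists_le_card_eq hcard
  obtain ⟨c, hc⟩ := exists_forall_count_map_sub_le_count_zero W'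
  have heq := sumsOfLength_map_sub (S := W') (ZModModule.char_nsmul_eq_zero n c)
  have hmono := sumsOfLength_mono (ℓ := n) hW'
  have hlt := lt_card_sumsOfLength_of_forall_count_le_count_zero hc (n := n) (r := r)
    (heq ▸ fun h0 ↦ h (hmono h0)) (by simp [hcard']) hr
  rw [sumsOfLength_eq_image_sum_sub (m := n) (by simp [hcard', add_comm]), heq] at hlt
  exact hlt.trans_le (Finset.card_image_le.trans (Finset.card_le_card hmono))

theorem sumsOfLength_eq_image_add_nsmul (h : 0 ∉ sumsOfLength n W) (hcard : W.card = n + r)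
    (hr1 : 1 ≤ r) (hr : r < n) (hsums : (sumsOfLength n W).card ≤ r + 1) :
    ∃ b c d, sumsOfLength n W = (Finset.range (r + 1)).image (fun i ↦ c + i • d) ∧
      ((r + 1) • d = 0 ∨ ∀ x ∈ W, x = b ∨ x = b + d) := by
  obtain ⟨a, ha⟩ := exists_forall_count_map_sub_le_count_zero W
  have heq := sumsOfLength_map_sub (S := W) (ZModModule.char_nsmul_eq_zero n a)
  set W' := W.map (· - a)
  have hcard' : W'.card = n + r := by simpa [W'] using hcard
  have hsums' : (sumsOfLength r W').card ≤ r + 1 := by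
    rw [sumsOfLength_eq_image_sum_sub (m := n) (by omega), heq]
    exact Finset.card_image_le.trans hsums
  obtain ⟨d, hprog, hd⟩ := sumsOfLength_eq_image_nsmul ha (heq ▸ h) hcard'.ge hr1 hr hsums'
  refine ⟨a + d, W'.sum, -d, ?_, hd.imp (by simp) fun hW x hx ↦ ?_⟩
  · rw [← heq, sumsOfLength_eq_image_sum_sub hcard'.symm, hprog, Finset.image_image]
    simp [Function.comp_def, sub_eq_add_neg]
  · refine (hW (x - a) (Multiset.mem_map_of_mem _ hx)).symm.imp (fun hxd ↦ ?_) (fun hx0 ↦ ?_)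
    · rw [← hxd, add_sub_cancel]
    · rw [add_neg_cancel_right, sub_eq_zero.1 hx0]

end ZModModule

end Sums

section ZMod

variable {n k : ℕ}

theorem exists_translates_notMem_Icc {δ : ℕ} (hk : 2 ≤ k) (hkn : k + 2 ≤ n) (hδ : 2 ≤ δ)
    (hδn : δ + 2 ≤ n) :
    ∃ j, 1 ≤ j ∧ j + 1 ≤ k ∧ (j + δ) % n ∉ Finset.Icc 1 k ∧ (j + 1 + δ) % n ∉ Finset.Icc 1 k := by
  simp only [Finset.mem_Icc]
  rcases lt_or_ge (k + δ) n with hlt | hge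
  · refine ⟨k - 1, by omega, by omega, ?_, ?_⟩
    · rw [Nat.mod_eq_of_lt (by omega)]; omega
    · rw [Nat.mod_eq_of_lt (by omega)]; omega
  · refine ⟨n - 1 - δ, by omega, by omega, ?_, ?_⟩
    · rw [Nat.mod_eq_of_lt (by omega)]; omega
    · rw [show n - 1 - δ + 1 + δ = n by omega, Nat.mod_self]; omega

theorem zero_notMem_of_forall_val_mem_Icc {s : Finset (ZMod n)}
    (h : ∀ x ∈ s, x.val ∈ Finset.Icc 1 k) : 0 ∉ s := fun h0 ↦ by
  simpa using h 0 h0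

theorem eq_replicate_add_replicate_of_forall_eq_or_eq_add_one {A : Multiset (ZMod n)} {b : ZMod n}
    (hk : 1 ≤ k) (hcard : A.card + 1 = n + k)
    (h : ∀ s ∈ sumsOfLength n A, s.val ∈ Finset.Icc 1 k)
    (hb : ∀ x ∈ A, x = b ∨ x = b + 1) : A = .replicate (n - 1) b + .replicate k (b + 1) := by
  obtain ⟨t, ht⟩ := exists_eq_replicate_add_replicate hb
  have hcount (x : ZMod n) : A.count x < n := count_lt_of_zero_notMem_sumsOfLength
    (ZModModule.char_nsmul_eq_zero n x) (zero_notMem_of_forall_val_mem_Icc h)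
  have hbn := hcount b
  have htn : t < n := (Multiset.le_count_iff_replicate_le.2
    ((Multiset.le_add_left _ _).trans_eq ht.symm)).trans_lt (hcount (b + 1))
  have hbt : A.count b + t = A.card := by simpa using (congrArg Multiset.card ht).symm
  have hle : .replicate (n - t) b + .replicate t (b + 1) ≤ A :=
    (add_le_add ((Multiset.replicate_le_replicate b).2 (by omega)) le_rfl).trans_eq ht.symm
  have hsum : (.replicate (n - t) b + .replicate t (b + 1) : Multiset (ZMod n)).sum = t := by
    simp [Nat.cast_sub htn.le]
  have htk := h t (mem_sumsOfLength.2 ⟨_, hle, by simp [htn.le], hsum⟩)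
  rw [ZMod.val_natCast_of_lt htn, Finset.mem_Icc] at htk
  rw [ht, show A.count b = n - 1 by omega, show t = k by omega]

variable [NeZero n]

theorem card_le_of_forall_val_mem_Icc {s : Finset (ZMod n)} (h : ∀ x ∈ s, x.val ∈ Finset.Icc 1 k) :
    s.card ≤ k := by
  simpa using Finset.card_le_card_of_injOn ZMod.val h (ZMod.val_injective n).injOn

theorem mem_iff_val_mem_Icc {s : Finset (ZMod n)} (h : ∀ x ∈ s, x.val ∈ Finset.Icc 1 k)
    (hs : k ≤ s.card) (x : ZMod n) : x ∈ s ↔ x.val ∈ Finset.Icc 1 k := by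
  have hle : (Finset.univ.filter fun x : ZMod n ↦ x.val ∈ Finset.Icc 1 k).card ≤ k :=
    card_le_of_forall_val_mem_Icc fun x hx ↦ (Finset.mem_filter.1 hx).2
  rw [Finset.eq_of_subset_of_card_le (fun x hx ↦ Finset.mem_filter.2 ⟨Finset.mem_univ x, h x hx⟩)
    (hle.trans hs)]
  simp

-- Translation by `d` takes only the last term of the progression out of it, whereas for
-- `d ≠ 0, 1, -1` it takes two consecutive elements out of the interval.
theorem eq_one_or_eq_neg_one_of_image_eq_interval (hk : 2 ≤ k) (hkn : k + 2 ≤ n) {c d : ZMod n}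
    (h : ∀ x : ZMod n, x ∈ (Finset.range k).image (fun i ↦ c + i • d) ↔ x.val ∈ Finset.Icc 1 k) :
    d = 1 ∨ d = -1 := by
  have hval {j : ℕ} (hj : j ≤ k) : (j : ZMod n).val = j := ZMod.val_natCast_of_lt (by omega)
  have hlast {j : ℕ} (hj1 : 1 ≤ j) (hjk : j ≤ k) (hout : (j + d.val) % n ∉ Finset.Icc 1 k) :
      (j : ZMod n) = c + (k - 1) • d := by
    obtain ⟨i, hi, hij⟩ := Finset.mem_image.1 <| (h j).2 (by simp [hval hjk, hj1, hjk])
    rw [Finset.mem_range] at hi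
    obtain hik | rfl : i + 1 < k ∨ i = k - 1 := by omega
    · refine absurd ((h (j + d)).1 (Finset.mem_image.2 ⟨i + 1, Finset.mem_range.2 hik, ?_⟩)) ?_
      · simp only [← hij, succ_nsmul, add_assoc]
      · rwa [ZMod.val_add, hval hjk]
    · exact hij.symm
  have hne {j : ℕ} (hj : j + 1 ≤ k) : (j : ZMod n) ≠ (j + 1 : ℕ) := fun heq ↦ by
    have := congrArg ZMod.val heq
    rw [hval (by omega), hval hj] at this
    omega
  have hd0 : d ≠ 0 := by
    rintro rfl
    have hconst {j : ℕ} (hj1 : 1 ≤ j) (hjk : j ≤ k) : (j : ZMod n) = c := by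
      obtain ⟨i, -, hij⟩ := Finset.mem_image.1 <| (h j).2 (by simp [hval hjk, hj1, hjk])
      simpa using hij.symm
    exact hne hk ((hconst le_rfl (by omega)).trans (hconst one_le_two hk).symm)
  by_contra! hd
  have hd1 : d.val ≠ 1 := fun h1 ↦ hd.1 (by rw [← ZMod.natCast_zmod_val d, h1, Nat.cast_one])
  have hdn : d.val ≠ n - 1 := fun h1 ↦ hd.2 <| by
    rw [← ZMod.natCast_zmod_val d, h1, Nat.cast_sub (by omega)]
    simp
  have hdpos : d.val ≠ 0 := fun h0 ↦ hd0 ((ZMod.val_eq_zero d).1 h0)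
  have hdlt := ZMod.val_lt d
  obtain ⟨j, hj1, hjk, hout, hout'⟩ :=
    exists_translates_notMem_Icc (δ := d.val) hk hkn (by omega) (by omega)
  exact hne hjk ((hlast hj1 (by omega) hout).trans (hlast (by omega) hjk hout').symm)

theorem exists_eq_replicate_add_replicate_add_one (hk : 2 ≤ k) (hkn : k + 2 ≤ n)
    {A : Multiset (ZMod n)} (hcard : A.card + 1 = n + k)
    (h : ∀ s ∈ sumsOfLength n A, s.val ∈ Finset.Icc 1 k) :
    ∃ b, A = .replicate (n - 1) b + .replicate k (b + 1) := by
  obtain ⟨r, rfl⟩ : ∃ r, k = r + 1 := ⟨k - 1, by omega⟩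
  have h0 : 0 ∉ sumsOfLength n A := zero_notMem_of_forall_val_mem_Icc h
  obtain ⟨b, c, d, hprog, hd⟩ := sumsOfLength_eq_image_add_nsmul h0 (by omega : A.card = n + r)
    (by omega) (by omega) (card_le_of_forall_val_mem_Icc h)
  have hinterval := mem_iff_val_mem_Icc h (lt_card_sumsOfLength h0 (r := r) (by omega) (by omega))
  rw [hprog] at hinterval
  have hr0 : ((r + 1 : ℕ) : ZMod n) ≠ 0 := by
    rw [Ne, ZMod.natCast_eq_zero_iff]
    exact Nat.not_dvd_of_pos_of_lt r.succ_pos (by omega)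
  rcases eq_one_or_eq_neg_one_of_image_eq_interval hk hkn hinterval with rfl | rfl
  · exact ⟨b, eq_replicate_add_replicate_of_forall_eq_or_eq_add_one (by omega) hcard h <|
      hd.resolve_left (by simpa using hr0)⟩
  · refine ⟨b - 1, eq_replicate_add_replicate_of_forall_eq_or_eq_add_one (by omega) hcard h
      fun x hx ↦ ?_⟩
    simpa [or_comm, sub_eq_add_neg] using
      hd.resolve_left (by rwa [smul_neg, neg_eq_zero, nsmul_one]) x hx

end ZMod

section Reduction

variable {n : ℕ} {G : Type*} [AddCommGroup G] [Module (ZMod n) G]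

theorem IsShortZeroSumFree.count_lt [NeZero n] [DecidableEq G] {ℓ : ℕ} {S : Multiset G}
    (h : IsShortZeroSumFree ℓ S) (hℓ : n ≤ ℓ) (g : G) : S.count g < n := by
  refine count_lt_of_zero_notMem_sumsOfLength (ZModModule.char_nsmul_eq_zero n g) fun h0 ↦ ?_
  obtain ⟨T, hT, hcard, hsum⟩ := mem_sumsOfLength.1 h0
  exact h T hT (by rw [← Multiset.card_pos, hcard]; exact NeZero.pos n) (hcard.trans_le hℓ) hsum

-- If `s` is the sum of `n` coefficients `a`, then the corresponding `a • e + f` and `j ≤ m` copies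
-- of `e` have the sum `(s + j) • e`.
theorem val_mem_Icc_of_mem_sumsOfLength [NeZero n] {e f : G} {m : ℕ} {A : Multiset (ZMod n)}
    (h : IsShortZeroSumFree (n + m) (.replicate m e + A.map (fun a ↦ a • e + f))) {s : ZMod n}
    (hs : s ∈ sumsOfLength n A) : s.val ∈ Finset.Icc 1 (n - 1 - m) := by
  obtain ⟨B, hB, hcard, rfl⟩ := mem_sumsOfLength.1 hs
  have hadd {j : ℕ} (hj : j ≤ m) : B.sum + j ≠ 0 := fun h0 ↦ by
    refine h (.replicate j e + B.map (fun a ↦ a • e + f)) ?_ ?_ ?_ ?_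
    · exact add_le_add ((Multiset.replicate_le_replicate e).2 hj) (Multiset.map_le_map hB)
    · rw [← Multiset.card_pos]
      simp [hcard, NeZero.pos n]
    · simp only [Multiset.card_add, Multiset.card_replicate, Multiset.card_map]; omega
    · rw [Multiset.sum_add, Multiset.sum_replicate, Multiset.sum_map_add, ← Multiset.sum_smul,
        Multiset.map_const', Multiset.sum_replicate, hcard, ZModModule.char_nsmul_eq_zero n f,
        add_zero, ← Nat.cast_smul_eq_nsmul (ZMod n) j e, ← add_smul, add_comm, h0, zero_smul]
  have hlt := ZMod.val_lt B.sum
  have hpos : B.sum.val ≠ 0 := fun h0 ↦ hadd m.zero_le (by simpa using h0)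
  have hgap : m < n - B.sum.val := by
    by_contra! hle
    exact hadd hle (by simp [Nat.cast_sub hlt.le])
  exact Finset.mem_Icc.2 ⟨by omega, by omega⟩

theorem linearIndependent_pair_of_isShortZeroSumFree [NeZero n] {k : ℕ} (hkn : k + 1 ≤ n) {e f : G}
    (h : IsShortZeroSumFree (2 * n - 1 - k)
      (.replicate (n - 1) e + .replicate (n - 1) f + .replicate k (e + f))) :
    LinearIndependent (ZMod n) ![e, f] := by
  refine LinearIndependent.pair_iff.2 fun x y hxy ↦ ?_
  by_contra hne
  have hpos : 0 < x.val + y.val := by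
    by_contra! hle
    exact hne ⟨(ZMod.val_eq_zero x).1 (by omega), (ZMod.val_eq_zero y).1 (by omega)⟩
  have hx := ZMod.val_lt x
  have hy := ZMod.val_lt y
  obtain ⟨l, hlx, hly, hlk, hl⟩ :
      ∃ l ≤ x.val, l ≤ y.val ∧ l ≤ k ∧ x.val + y.val - l ≤ 2 * n - 1 - k :=
    ⟨min (min x.val y.val) k, by omega, by omega, by omega, by omega⟩
  refine h (.replicate (x.val - l) e + .replicate (y.val - l) f + .replicate l (e + f)) ?_ ?_ ?_ ?_
  · refine add_le_add (add_le_add ?_ ?_) ((Multiset.replicate_le_replicate _).2 hlk)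
    · exact (Multiset.replicate_le_replicate e).2 (by omega)
    · exact (Multiset.replicate_le_replicate f).2 (by omega)
  · rw [← Multiset.card_pos]
    simp only [Multiset.card_add, Multiset.card_replicate]
    omega
  · simp only [Multiset.card_add, Multiset.card_replicate]
    omega
  · have hval (z : ZMod n) (g : G) : z • g = z.val • g := by
      rw [← Nat.cast_smul_eq_nsmul (ZMod n), ZMod.natCast_zmod_val]
    calc _ = (x.val - l) • e + (y.val - l) • f + l • (e + f) := by simp
      _ = (x.val - l + l) • e + (y.val - l + l) • f := by simp only [add_nsmul, nsmul_add]; abel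
      _ = 0 := by rw [Nat.sub_add_cancel hlx, Nat.sub_add_cancel hly, ← hval, ← hval, hxy]

theorem count_and_card_of_isShortZeroSumFree [NeZero n] {e f : G} {m k : ℕ} {A : Multiset (ZMod n)}
    (hk : 1 ≤ k) (hkn : k + 1 ≤ n) (hm : m < n) (hcard : 2 * n - 2 + k ≤ m + A.card)
    (h : IsShortZeroSumFree (2 * n - 1 - k) (.replicate m e + A.map (fun a ↦ a • e + f))) :
    m + 1 = n ∧ A.card + 1 = n + k ∧ ∀ s ∈ sumsOfLength n A, s.val ∈ Finset.Icc 1 k := by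
  have hval : ∀ s ∈ sumsOfLength n A, s.val ∈ Finset.Icc 1 (n - 1 - min m (n - 1 - k)) := fun s hs ↦
    val_mem_Icc_of_mem_sumsOfLength (h.mono
      (add_le_add_left ((Multiset.replicate_le_replicate e).2 (min_le_left _ _)) _) (by omega)) hs
  have hlower := lt_card_sumsOfLength (r := min (A.card - n) (n - 1))
    (zero_notMem_of_forall_val_mem_Icc hval) (by omega) (by omega)
  have hupper := card_le_of_forall_val_mem_Icc hval
  refine ⟨by omega, by omega, ?_⟩
  rwa [show n - 1 - min m (n - 1 - k) = k by omega] at hval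

end Reduction

theorem stmt6_general {n : ℕ} {G : Type*} [AddCommGroup G] [Module (ZMod n) G] {k : ℕ}
    (hk : 2 ≤ k) (hkn : k + 2 ≤ n) {S : Multiset G} (hcard : 2 * n - 2 + k ≤ S.card)
    (hS : IsShortZeroSumFree (2 * n - 1 - k) S) {e1 e2 : G}
    (hsupp : ∀ g ∈ S, g = e1 ∨ ∃ a : ZMod n, g = a • e1 + e2) :
    ∃ f2 : G, (∃ a : ZMod n, f2 = a • e1 + e2) ∧ LinearIndependent (ZMod n) ![e1, f2] ∧
      S = .replicate (n - 1) e1 + .replicate (n - 1) f2 + .replicate k (e1 + f2) := by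
  classical
  have : NeZero n := ⟨by omega⟩
  obtain ⟨A, hA⟩ : ∃ A : Multiset (ZMod n), S.filter (· ≠ e1) = A.map (fun a ↦ a • e1 + e2) :=
    exists_eq_map fun g hg ↦ by
      obtain ⟨hgS, hge⟩ := Multiset.mem_filter.1 hg
      exact ((hsupp g hgS).resolve_left hge).imp fun _ ↦ Eq.symm
  have hsplit := replicate_count_add_filter_ne S e1
  rw [hA] at hsplit
  have hScard : S.count e1 + A.card = S.card := by simpa using congrArg Multiset.card hsplit
  obtain ⟨hcount, hAcard, hval⟩ := count_and_card_of_isShortZeroSumFree (by omega) (by omega)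
    (hS.count_lt (by omega) e1) (hcard.trans_eq hScard.symm) (hsplit.symm ▸ hS)
  obtain ⟨b, rfl⟩ := exists_eq_replicate_add_replicate_add_one hk hkn hAcard hval
  have hSeq : S = .replicate (n - 1) e1 + .replicate (n - 1) (b • e1 + e2) +
      .replicate k (e1 + (b • e1 + e2)) := by
    rw [← hsplit, Nat.eq_sub_of_add_eq hcount, Multiset.map_add, Multiset.map_replicate,
      Multiset.map_replicate, ← add_assoc, add_smul, one_smul, add_comm _ e1, add_assoc e1]
  exact ⟨_, ⟨b, rfl⟩, linearIndependent_pair_of_isShortZeroSumFree (by omega) (hSeq ▸ hS), hSeq⟩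

theorem isBasis_of_linearIndependent {n : ℕ} [NeZero n] {e f : ZMod n × ZMod n}
    (h : LinearIndependent (ZMod n) ![e, f]) : IsBasis e f := by
  refine Finite.injective_iff_bijective.1 fun p q hpq ↦ ?_
  have := LinearIndependent.pair_iff.1 h (p.1 - q.1) (p.2 - q.2) <| by
    rw [sub_smul, sub_smul, sub_add_sub_comm, hpq, sub_self]
  exact Prod.ext (sub_eq_zero.1 this.1) (sub_eq_zero.1 this.2)

theorem stmt6 {n : ℕ} (hn : 4 ≤ n) (k : ℕ) (hk2 : 2 ≤ k) (hkn : k ≤ n - 2)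
    (S : Multiset (ZMod n × ZMod n)) (hcard : Multiset.card S = 2 * n - 2 + k)
    (hzs : ∀ T ≤ S, T ≠ 0 → Multiset.card T ≤ 2 * n - 1 - k → T.sum ≠ 0)
    (e1 e2 : ZMod n × ZMod n)
    (hsupp : ∀ g ∈ S, g = e1 ∨ ∃ a : ZMod n, g = a • e1 + e2) :
    ∃ f2 : ZMod n × ZMod n, (∃ a : ZMod n, f2 = a • e1 + e2) ∧ IsBasis e1 f2 ∧
      S = Multiset.replicate (n - 1) e1 + Multiset.replicate (n - 1) f2 +
            Multiset.replicate k (e1 + f2) := by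
  have : NeZero n := ⟨by omega⟩
  obtain ⟨f2, hf2, hli, hS⟩ := stmt6_general hk2 (by omega) hcard.ge hzs hsupp
  exact ⟨f2, hf2, isBasis_of_linearIndependent hli, hS⟩
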